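/- arXiv:2107.04368 — 2 statements merged into one kernel-verified Lean document; each statement's English description precedes it below -/
import Mathlib

section
/- Every triangle-free instance (N,V) of 3D-SR-SAS-BIN contains a stable P-matching. -/
open Finset

variable {A : Type*}

/-- `M` is a matching on agent set `N`: a set of pairwise disjoint triples of agents of `N`. -/
def IsMatching [DecidableEq A] (N : Finset A) (M : Finset (Finset A)) : Prop :=
  (∀ t ∈ M, t.card = 3 ∧ t ⊆ N) ∧ ∀ t ∈ M, ∀ s ∈ M, t ≠ s → Disjoint t s

/-- The (additively separable) utility of agent `a` in matching `M` under valuations `val`: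
the sum, over the triples of `M` containing `a`, of the valuations by `a` of the other
members; this is `0` if `a` is unmatched, and for a genuine matching it is the sum of the
valuations of `a`'s two partners. -/
def utility [DecidableEq A] (val : A → A → ℤ) (M : Finset (Finset A)) (a : A) : ℤ :=
  ∑ t ∈ M.filter (fun t => a ∈ t), ∑ b ∈ t.erase a, val a b

/-- The triple consisting of the three distinct agents `x, y, z` of `N` blocks `M`. -/
def Blocks [DecidableEq A] (N : Finset A) (val : A → A → ℤ) (M : Finset (Finset A))
    (x y z : A) : Prop :=
  x ∈ N ∧ y ∈ N ∧ z ∈ N ∧ x ≠ y ∧ x ≠ z ∧ y ≠ z ∧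
  utility val M x < val x y + val x z ∧
  utility val M y < val y x + val y z ∧
  utility val M z < val z x + val z y

/-- `M` is stable: no triple of agents of `N` blocks it. -/
def IsStable [DecidableEq A] (N : Finset A) (val : A → A → ℤ) (M : Finset (Finset A)) : Prop :=
  ∀ x y z : A, ¬ Blocks N val M x y z

/-- Binary symmetric preferences on `N`. -/
def BinSym [DecidableEq A] (N : Finset A) (val : A → A → ℤ) : Prop :=
  (∀ a ∈ N, ∀ b ∈ N, a ≠ b → val a b = 0 ∨ val a b = 1) ∧
  (∀ a ∈ N, ∀ b ∈ N, val a b = val b a)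

/-- A `P`-matching: a matching in which every matched agent has strictly positive utility. -/
def IsPMatching [DecidableEq A] (N : Finset A) (val : A → A → ℤ)
    (M : Finset (Finset A)) : Prop :=
  IsMatching N M ∧ ∀ a : A, (∃ t ∈ M, a ∈ t) → 0 < utility val M a

/-- `x, y, z` form a triangle: three distinct agents of `N` whose pairwise valuations
all equal `1`. -/
def IsTriangle [DecidableEq A] (N : Finset A) (val : A → A → ℤ) (x y z : A) : Prop :=
  x ∈ N ∧ y ∈ N ∧ z ∈ N ∧ x ≠ y ∧ x ≠ z ∧ y ≠ z ∧
  val x y = 1 ∧ val y z = 1 ∧ val x z = 1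

/-- The instance contains no triangle. -/
def TriangleFree [DecidableEq A] (N : Finset A) (val : A → A → ℤ) : Prop :=
  ∀ x y z : A, ¬ IsTriangle N val x y z

/-!
Draw an edge between two agents who value each other at `1`. Without triangles, a triple giving each
of its members positive utility is a path on three vertices, whose center has utility `2` and whose
ends have utility `1`; so a triple can only block if it is a path `p - c - q` with `p` and `q`
unmatched and `c` not a center. Hence it suffices to pack disjoint paths in such a way that every
vertex with two uncovered neighbours is a center.

Such a packing is built one vertex `x` at a time. If `x` spoils the packing, then, unless a path
through `x` and uncovered vertices can be added, an end `c` of some path `c - b - d` is adjacent to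
`x` and to an uncovered vertex `q`. If `b` has an uncovered neighbour `r`, the path is exchanged for
`x - c - q` and `d - b - r`. Otherwise it is exchanged for `x - c - b`, and `d` takes over the role
of `x`; the set of uncovered vertices stays the same, and one path whose center had no uncovered
neighbour gave way to a path whose center has one, so this cannot go on forever.
-/

section PathPacking

variable {G : SimpleGraph A} {S t : Finset A} {M : Finset (Finset A)} {b c d p q r x : A}

/-- `c` is a center of the triple `t`: it is adjacent to both other members. A triple with a center
is the vertex set of a path on three vertices. -/
def IsCenter (G : SimpleGraph A) (t : Finset A) (c : A) : Prop :=
  t.card = 3 ∧ c ∈ t ∧ ∀ a ∈ t, a ≠ c → G.Adj c a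

variable [DecidableEq A]

lemma isCenter_triple (hp : G.Adj c p) (hq : G.Adj c q) (hpq : p ≠ q) :
    IsCenter G {c, p, q} c :=
  ⟨card_eq_three.2 ⟨c, p, q, hp.ne, hq.ne, hpq, rfl⟩, mem_insert_self .., by grind⟩

lemma IsCenter.exists_eq_triple (hb : IsCenter G t b) (hc : c ∈ t) (hcb : c ≠ b) :
    ∃ d, t = {b, c, d} ∧ c ≠ d ∧ G.Adj b c ∧ G.Adj b d := by
  obtain ⟨hcard, hbt, hadj⟩ := hb
  obtain ⟨d, hdt, hd⟩ : ∃ d ∈ t, d ∉ ({b, c} : Finset A) :=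
    exists_mem_notMem_of_card_lt_card (card_le_two.trans_lt (by omega))
  obtain ⟨hdb, hdc⟩ : d ≠ b ∧ d ≠ c := by simpa using hd
  refine ⟨d, (eq_of_subset_of_card_le (by grind) ?_).symm, hdc.symm, hadj c hc hcb, hadj d hdt hdb⟩
  rw [hcard, card_eq_three.2 ⟨b, c, d, hcb.symm, hdb.symm, hdc.symm, rfl⟩]

omit [DecidableEq A] in
lemma IsCenter.unique (hG : G.CliqueFree 3) (hb : IsCenter G t b) (hc : IsCenter G t c) :
    c = b := by
  classical
  by_contra hcb
  obtain ⟨d, rfl, hcd, hbc, hbd⟩ := hb.exists_eq_triple hc.2.1 hcb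
  have hcd' : G.Adj c d := hc.2.2 d (by simp) hcd.symm
  exact hG _ (SimpleGraph.is3Clique_triple_iff.2 ⟨hbc, hbd, hcd'⟩)

/-- The set of vertices lying on one of the triples of `M`. -/
def covered (M : Finset (Finset A)) : Finset A :=
  M.biUnion id

lemma mem_covered : x ∈ covered M ↔ ∃ t ∈ M, x ∈ t := by
  simp [covered]

lemma covered_insert : covered (insert t M) = t ∪ covered M :=
  biUnion_insert

lemma covered_erase (hM : (M : Set (Finset A)).PairwiseDisjoint id) (ht : t ∈ M) :
    covered (M.erase t) = covered M \ t := by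
  ext a
  simp only [mem_covered, mem_erase, mem_sdiff]
  constructor
  · rintro ⟨s, ⟨hst, hs⟩, ha⟩
    exact ⟨⟨s, hs, ha⟩, disjoint_left.1 (hM hs ht hst) ha⟩
  · rintro ⟨⟨s, hs, ha⟩, hat⟩
    exact ⟨s, ⟨fun hst => hat (hst ▸ ha), hs⟩, ha⟩

/-- `M` consists of pairwise disjoint triples, each the vertex set of a path in `G`. -/
structure IsPathPacking (G : SimpleGraph A) (M : Finset (Finset A)) : Prop where
  exists_isCenter : ∀ t ∈ M, ∃ c, IsCenter G t c
  pairwiseDisjoint : (M : Set (Finset A)).PairwiseDisjoint id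

namespace IsPathPacking

lemma erase (h : IsPathPacking G M) (t : Finset A) : IsPathPacking G (M.erase t) where
  exists_isCenter s hs := h.exists_isCenter s (mem_of_mem_erase hs)
  pairwiseDisjoint := h.pairwiseDisjoint.subset (coe_subset.2 (erase_subset t M))

lemma insert (h : IsPathPacking G M) (ht : IsCenter G t c) (htM : Disjoint t (covered M)) :
    IsPathPacking G (insert t M) where
  exists_isCenter := (forall_mem_insert ..).2 ⟨⟨c, ht⟩, h.exists_isCenter⟩
  pairwiseDisjoint := by
    rw [coe_insert]
    exact h.pairwiseDisjoint.insert fun s hs _ => (disjoint_biUnion_right t M id).1 htM s hs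

end IsPathPacking

/-- The neighbours of `c` in `S` that `M` leaves uncovered. -/
def freeNeighbors (G : SimpleGraph A) (S : Finset A) (M : Finset (Finset A)) (c : A) : Set A :=
  G.neighborSet c ∩ ↑(S \ covered M)

lemma mem_freeNeighbors : p ∈ freeNeighbors G S M c ↔ G.Adj c p ∧ p ∈ S ∧ p ∉ covered M := by
  simp [freeNeighbors]

lemma freeNeighbors_mono {S' : Finset A} {M' : Finset (Finset A)}
    (hU : S' \ covered M' ⊆ S \ covered M) (c : A) :
    freeNeighbors G S' M' c ⊆ freeNeighbors G S M c :=
  Set.inter_subset_inter_right _ (coe_subset.2 hU)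

/-- A path packing inside `S` in which every vertex of `S` with two uncovered neighbours is a
center. For the graph of a triangle-free instance these are stable matchings. -/
structure IsSaturatedPacking (G : SimpleGraph A) (S : Finset A) (M : Finset (Finset A)) : Prop
    extends IsPathPacking G M where
  covered_subset : covered M ⊆ S
  exists_isCenter_of_nontrivial :
    ∀ c ∈ S, (freeNeighbors G S M c).Nontrivial → ∃ t ∈ M, IsCenter G t c

open Classical in
/-- The triples of `M` having a center without uncovered neighbours. Their number decreases when
the vertex left out of a saturated packing is shifted. -/
noncomputable def idleTriples (G : SimpleGraph A) (S : Finset A) (M : Finset (Finset A)) :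
    Finset (Finset A) :=
  {t ∈ M | ∃ c, IsCenter G t c ∧ freeNeighbors G S M c = ∅}

namespace IsSaturatedPacking

lemma insert_uncovered (h : IsSaturatedPacking G S M)
    (hx : ¬ (freeNeighbors G S M x).Nontrivial)
    (hcx : ∀ c ∈ S, G.Adj c x → (freeNeighbors G S M c).Nonempty → ∃ t ∈ M, IsCenter G t c) :
    IsSaturatedPacking G (insert x S) M where
  toIsPathPacking := h.toIsPathPacking
  covered_subset := h.covered_subset.trans (subset_insert x S)
  exists_isCenter_of_nontrivial c hc h2 := by
    have hfree : ∀ p ∈ freeNeighbors G (insert x S) M c, p ≠ x → p ∈ freeNeighbors G S M c := by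
      simp only [mem_freeNeighbors]
      grind
    by_cases hadj : G.Adj c x
    · obtain ⟨q, hq, hqx⟩ := h2.exists_ne x
      exact hcx c (mem_of_mem_insert_of_ne hc hadj.ne) hadj ⟨q, hfree q hq hqx⟩
    · have h2' : (freeNeighbors G S M c).Nontrivial :=
        h2.mono fun p hp => hfree p hp (by rintro rfl; exact hadj hp.1)
      rcases mem_insert.1 hc with rfl | hcS
      · exact absurd h2' hx
      · exact h.exists_isCenter_of_nontrivial c hcS h2'

lemma insert_triple (h : IsSaturatedPacking G S M) (ht : IsCenter G t c) (hxt : x ∈ t)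
    (htS : t ⊆ insert x S \ covered M)
    (hx : (freeNeighbors G S M x).Nontrivial → IsCenter G t x) :
    IsSaturatedPacking G (insert x S) (insert t M) where
  toIsPathPacking := h.toIsPathPacking.insert ht (disjoint_sdiff_self_left.mono_left htS)
  covered_subset := by
    rw [covered_insert]
    exact union_subset (htS.trans sdiff_subset) (h.covered_subset.trans (subset_insert x S))
  exists_isCenter_of_nontrivial e he h2 := by
    replace h2 : (freeNeighbors G S M e).Nontrivial :=
      h2.mono (freeNeighbors_mono (by rw [covered_insert]; grind) e)
    rcases mem_insert.1 he with rfl | heS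
    · exact ⟨t, mem_insert_self t M, hx h2⟩
    · obtain ⟨s, hs, hse⟩ := h.exists_isCenter_of_nontrivial e heS h2
      exact ⟨s, mem_insert_of_mem hs, hse⟩

lemma exists_isCenter_erase (hG : G.CliqueFree 3) (h : IsSaturatedPacking G S M)
    (hb : IsCenter G t b) {e : A} (he : e ∈ S) (heb : e ≠ b)
    (h2 : (freeNeighbors G S M e).Nontrivial) : ∃ s ∈ M.erase t, IsCenter G s e := by
  obtain ⟨s, hs, hse⟩ := h.exists_isCenter_of_nontrivial e he h2
  refine ⟨s, mem_erase.2 ⟨?_, hs⟩, hse⟩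
  rintro rfl
  exact heb (hb.unique hG hse)

lemma exchange (hG : G.CliqueFree 3) (h : IsSaturatedPacking G S M) (hxS : x ∉ S)
    (hx : ¬ (freeNeighbors G S M x).Nontrivial) (ht : {b, c, d} ∈ M)
    (hbc : G.Adj b c) (hbd : G.Adj b d) (hcd : c ≠ d) (hcx : G.Adj c x)
    (hq : q ∈ freeNeighbors G S M c) (hr : r ∈ freeNeighbors G S M b) :
    IsSaturatedPacking G (insert x S)
      (insert {c, x, q} (insert {b, d, r} (M.erase {b, c, d}))) := by
  obtain ⟨hcq, hqS, hqM⟩ := mem_freeNeighbors.1 hq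
  obtain ⟨hbr, hrS, hrM⟩ := mem_freeNeighbors.1 hr
  have hS := h.covered_subset
  have htM : {b, c, d} ⊆ covered M := subset_biUnion_of_mem id ht
  have hrq : r ≠ q := by
    rintro rfl
    exact hG _ (SimpleGraph.is3Clique_triple_iff.2 ⟨hbc, hbr, hcq⟩)
  have hb : IsCenter G {b, d, r} b := isCenter_triple hbd hbr (by grind)
  have hc : IsCenter G {c, x, q} c := isCenter_triple hcx hcq (by grind)
  have hcov := covered_erase h.pairwiseDisjoint ht
  have hdisj₁ : Disjoint {b, d, r} (covered (M.erase {b, c, d})) := by grind [disjoint_left]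
  have hdisj₂ : Disjoint {c, x, q} (covered (insert {b, d, r} (M.erase {b, c, d}))) := by
    have := hbc.ne
    grind [disjoint_left, covered_insert]
  have hsdiff : insert x S \ covered (insert {c, x, q} (insert {b, d, r} (M.erase {b, c, d}))) ⊆
      S \ covered M := by
    grind [covered_insert]
  refine ⟨((h.erase _).insert hb hdisj₁).insert hc hdisj₂, ?_, fun e he h2 => ?_⟩
  · grind [covered_insert]
  · replace h2 := h2.mono (freeNeighbors_mono hsdiff e)
    rcases mem_insert.1 he with rfl | heS
    · exact absurd h2 hx
    rcases eq_or_ne e b with rfl | heb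
    · exact ⟨_, by simp, hb⟩
    · obtain ⟨s, hs, hse⟩ :=
        h.exists_isCenter_erase hG (isCenter_triple hbc hbd hcd) heS heb h2
      exact ⟨s, by simp [mem_erase.1 hs], hse⟩

lemma shift_sdiff_covered (h : IsSaturatedPacking G S M) (hxS : x ∉ S) (ht : {b, c, d} ∈ M) :
    insert x (S.erase d) \ covered (insert {c, x, b} (M.erase {b, c, d})) = S \ covered M := by
  have := h.covered_subset
  have htM : {b, c, d} ⊆ covered M := subset_biUnion_of_mem id ht
  rw [covered_insert, covered_erase h.pairwiseDisjoint ht]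
  grind

lemma shift (hG : G.CliqueFree 3) (h : IsSaturatedPacking G S M) (hxS : x ∉ S)
    (hx : ¬ (freeNeighbors G S M x).Nontrivial) (ht : {b, c, d} ∈ M)
    (hbc : G.Adj b c) (hbd : G.Adj b d) (hcd : c ≠ d) (hcx : G.Adj c x)
    (hb : freeNeighbors G S M b = ∅) :
    IsSaturatedPacking G (insert x (S.erase d)) (insert {c, x, b} (M.erase {b, c, d})) := by
  have hS := h.covered_subset
  have htM : {b, c, d} ⊆ covered M := subset_biUnion_of_mem id ht
  have hcov := covered_erase h.pairwiseDisjoint ht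
  have hfree := freeNeighbors_mono (G := G) (h.shift_sdiff_covered hxS ht).subset
  have hc : IsCenter G {c, x, b} c := isCenter_triple hcx hbc.symm (by grind)
  have hdisj : Disjoint {c, x, b} (covered (M.erase {b, c, d})) := by grind [disjoint_left]
  refine ⟨(h.erase _).insert hc hdisj, ?_, fun e he h2 => ?_⟩
  · have := hbd.ne
    grind [covered_insert]
  · replace h2 := h2.mono (hfree e)
    rcases mem_insert.1 he with rfl | heS
    · exact absurd h2 hx
    have heb : e ≠ b := by
      rintro rfl
      exact h2.nonempty.ne_empty hb
    obtain ⟨s, hs, hse⟩ := h.exists_isCenter_erase hG (isCenter_triple hbc hbd hcd)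
      (mem_of_mem_erase heS) heb h2
    exact ⟨s, mem_insert_of_mem hs, hse⟩

lemma card_idleTriples_shift_lt (hG : G.CliqueFree 3) (h : IsSaturatedPacking G S M) (hxS : x ∉ S)
    (ht : {b, c, d} ∈ M) (hbc : G.Adj b c) (hbd : G.Adj b d) (hcd : c ≠ d) (hcx : G.Adj c x)
    (hb : freeNeighbors G S M b = ∅) (hc : (freeNeighbors G S M c).Nonempty) :
    (idleTriples G (insert x (S.erase d)) (insert {c, x, b} (M.erase {b, c, d}))).card <
      (idleTriples G S M).card := by
  classical
  have htM : {b, c, d} ⊆ covered M := subset_biUnion_of_mem id ht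
  have hxb : x ≠ b := by grind [h.covered_subset]
  have hfree : freeNeighbors G (insert x (S.erase d)) (insert {c, x, b} (M.erase {b, c, d})) =
      freeNeighbors G S M := by
    funext e
    rw [freeNeighbors, h.shift_sdiff_covered hxS ht, freeNeighbors]
  have hnew : ¬ ∃ e, IsCenter G {c, x, b} e ∧ freeNeighbors G S M e = ∅ := by
    rintro ⟨e, he, hempty⟩
    rw [(isCenter_triple hcx hbc.symm hxb).unique hG he] at hempty
    exact hc.ne_empty hempty
  have hold : {b, c, d} ∈ idleTriples G S M :=
    mem_filter.2 ⟨ht, b, isCenter_triple hbc hbd hcd, hb⟩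
  rw [idleTriples, hfree, filter_insert, if_neg hnew, filter_erase]
  exact card_erase_lt_of_mem hold

lemma exists_insert_or_shift (hG : G.CliqueFree 3) (h : IsSaturatedPacking G S M) (hxS : x ∉ S) :
    (∃ M', IsSaturatedPacking G (insert x S) M') ∨
      ∃ y S' M', y ∉ S' ∧ insert y S' = insert x S ∧ IsSaturatedPacking G S' M' ∧
        (idleTriples G S' M').card < (idleTriples G S M).card := by
  have hxM : x ∉ covered M := fun hx => hxS (h.covered_subset hx)
  by_cases hx : (freeNeighbors G S M x).Nontrivial
  · obtain ⟨p, hp, q, hq, hpq⟩ := hx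
    rw [mem_freeNeighbors] at hp hq
    have hcen := isCenter_triple hp.1 hq.1 hpq
    exact .inl ⟨_, h.insert_triple hcen (mem_insert_self ..) (by grind) fun _ => hcen⟩
  by_cases hsat : ∀ c ∈ S, G.Adj c x → (freeNeighbors G S M c).Nonempty → ∃ t ∈ M, IsCenter G t c
  · exact .inl ⟨M, h.insert_uncovered hx hsat⟩
  push Not at hsat
  obtain ⟨c, hcS, hcx, ⟨q, hq⟩, hcM⟩ := hsat
  by_cases hc : c ∈ covered M
  · obtain ⟨t, ht, hct⟩ := mem_covered.1 hc
    obtain ⟨b, hbt⟩ := h.exists_isCenter t ht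
    have hcb : c ≠ b := by
      rintro rfl
      exact hcM t ht hbt
    obtain ⟨d, rfl, hcd, hbc, hbd⟩ := hbt.exists_eq_triple hct hcb
    rcases (freeNeighbors G S M b).eq_empty_or_nonempty with hb | ⟨r, hr⟩
    · have hdS : d ∈ S := h.covered_subset (mem_covered.2 ⟨_, ht, by simp⟩)
      exact .inr ⟨d, _, _, by grind, by rw [insert_comm, insert_erase hdS],
        h.shift hG hxS hx ht hbc hbd hcd hcx hb,
        h.card_idleTriples_shift_lt hG hxS ht hbc hbd hcd hcx hb ⟨q, hq⟩⟩
    · exact .inl ⟨_, h.exchange hG hxS hx ht hbc hbd hcd hcx hq hr⟩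
  · obtain ⟨hcq, hqS, hqM⟩ := mem_freeNeighbors.1 hq
    exact .inl ⟨_, h.insert_triple (isCenter_triple hcx hcq (by grind)) (x := x) (by simp)
      (by grind) fun h2 => absurd h2 hx⟩

lemma exists_insert (hG : G.CliqueFree 3) (h : IsSaturatedPacking G S M) (hxS : x ∉ S) :
    ∃ M', IsSaturatedPacking G (insert x S) M' := by
  induction hn : (idleTriples G S M).card using Nat.strong_induction_on generalizing x S M with
  | _ n ih =>
    rcases h.exists_insert_or_shift hG hxS with hM' | ⟨y, S', M', hyS', hins, h', hlt⟩
    · exact hM'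
    · rw [← hins]
      exact ih _ (hn ▸ hlt) h' hyS' rfl

end IsSaturatedPacking

theorem exists_isSaturatedPacking (hG : G.CliqueFree 3) (S : Finset A) :
    ∃ M, IsSaturatedPacking G S M := by
  induction S using Finset.induction_on with
  | empty => exact ⟨∅, ⟨by simp, by simp⟩, by simp [covered], by simp⟩
  | insert x S hxS ih =>
    obtain ⟨M, hM⟩ := ih
    exact hM.exists_insert hG hxS

end PathPacking

section Preferences

variable [DecidableEq A] {N : Finset A} {val : A → A → ℤ} {M : Finset (Finset A)} {t : Finset A}
  {a b c x y z : A}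

/-- The graph on the agents whose edges join two distinct agents of `N` who value each other
at `1`. Both valuations are constrained so that the graph makes sense for arbitrary preferences. -/
def valuationGraph (N : Finset A) (val : A → A → ℤ) : SimpleGraph A where
  Adj a b := a ∈ N ∧ b ∈ N ∧ a ≠ b ∧ val a b = 1 ∧ val b a = 1
  symm := ⟨fun _ _ ⟨ha, hb, hab, h, h'⟩ => ⟨hb, ha, hab.symm, h', h⟩⟩
  loopless := ⟨fun _ h => h.2.2.1 rfl⟩

lemma BinSym.valuationGraph_adj (hbs : BinSym N val) (ha : a ∈ N) (hb : b ∈ N) (hab : a ≠ b)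
    (hval : val a b = 1) : (valuationGraph N val).Adj a b :=
  ⟨ha, hb, hab, hval, (hbs.2 b hb a ha).trans hval⟩

lemma TriangleFree.cliqueFree_valuationGraph (htf : TriangleFree N val) :
    (valuationGraph N val).CliqueFree 3 := by
  intro s hs
  obtain ⟨x, y, z, ⟨hx, hy, hxy, hvxy, -⟩, ⟨-, hz, hxz, hvxz, -⟩, ⟨-, -, hyz, hvyz, -⟩, -⟩ :=
    SimpleGraph.is3Clique_iff.1 hs
  exact htf x y z ⟨hx, hy, hz, hxy, hxz, hyz, hvxy, hvyz, hvxz⟩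

lemma IsMatching.utility_of_mem (hM : IsMatching N M) (ht : t ∈ M) (ha : a ∈ t) :
    utility val M a = ∑ b ∈ t.erase a, val a b := by
  have hfilter : M.filter (a ∈ ·) = {t} := by
    refine eq_singleton_iff_unique_mem.2 ⟨mem_filter.2 ⟨ht, ha⟩, fun s hs => ?_⟩
    obtain ⟨hs, has⟩ := mem_filter.1 hs
    by_contra hst
    exact disjoint_left.1 (hM.2 s hs t ht hst) has ha
  rw [utility, hfilter, sum_singleton]

lemma utility_of_notMem_covered (ha : a ∉ covered M) : utility val M a = 0 := by
  rw [mem_covered] at ha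
  rw [utility, filter_false_of_mem fun t ht hat => ha ⟨t, ht, hat⟩, sum_empty]

lemma IsPathPacking.isMatching {G : SimpleGraph A} (h : IsPathPacking G M) (hN : covered M ⊆ N) :
    IsMatching N M := by
  refine ⟨fun t ht => ⟨?_, (subset_biUnion_of_mem id ht).trans hN⟩, fun t ht s hs hts =>
    h.pairwiseDisjoint ht hs hts⟩
  obtain ⟨c, hc⟩ := h.exists_isCenter t ht
  exact hc.1

lemma IsMatching.utility_of_isCenter (hM : IsMatching N M) (ht : t ∈ M)
    (hc : IsCenter (valuationGraph N val) t c) : utility val M c = 2 := by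
  obtain ⟨hcard, hct, hadj⟩ := hc
  have hval : ∀ b ∈ t.erase c, val c b = 1 := fun b hb =>
    (hadj b (mem_of_mem_erase hb) (ne_of_mem_erase hb)).2.2.2.1
  rw [hM.utility_of_mem ht hct, sum_congr rfl hval]
  simp [card_erase_of_mem hct, hcard]

lemma IsPathPacking.utility_pos (h : IsPathPacking (valuationGraph N val) M)
    (hN : covered M ⊆ N) (hbs : BinSym N val) (ha : a ∈ covered M) : 0 < utility val M a := by
  have hM := h.isMatching hN
  obtain ⟨t, ht, hat⟩ := mem_covered.1 ha
  obtain ⟨c, hc⟩ := h.exists_isCenter t ht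
  rcases eq_or_ne a c with rfl | hac
  · simp [hM.utility_of_isCenter ht hc]
  have hnonneg : ∀ b ∈ t.erase a, 0 ≤ val a b := by
    intro b hb
    obtain ⟨hba, hb⟩ := mem_erase.1 hb
    rcases hbs.1 a (hN ha) b ((hM.1 t ht).2 hb) hba.symm with h | h <;> simp [h]
  have hval : val a c = 1 := (hc.2.2 a hat hac).2.2.2.2
  rw [hM.utility_of_mem ht hat]
  exact sum_pos' hnonneg ⟨c, mem_erase.2 ⟨hac.symm, hc.2.1⟩, by simp [hval]⟩

lemma Blocks.exists_path (hbs : BinSym N val) (htf : TriangleFree N val)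
    (hutil : ∀ a, 0 ≤ utility val M a) (hblock : Blocks N val M x y z) :
    ∃ c p q, p ≠ q ∧ (valuationGraph N val).Adj c p ∧ (valuationGraph N val).Adj c q ∧
      utility val M c < 2 ∧ utility val M p ≤ 0 ∧ utility val M q ≤ 0 := by
  obtain ⟨hx, hy, hz, hxy, hxz, hyz, hux, huy, huz⟩ := hblock
  have hyx := hbs.2 y hy x hx
  have hzx := hbs.2 z hz x hx
  have hzy := hbs.2 z hz y hy
  have hux' := hutil x
  have huy' := hutil y
  have huz' := hutil z
  -- Each of the three agents values another one, so at most one of the three edges is missing.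
  obtain ⟨hvxy, hvxz, hvyz⟩ | ⟨hvxy, hvxz, hvyz⟩ | ⟨hvxy, hvxz, hvyz⟩ :
      (val x y = 0 ∧ val x z = 1 ∧ val y z = 1) ∨ (val x y = 1 ∧ val x z = 0 ∧ val y z = 1) ∨
        (val x y = 1 ∧ val x z = 1 ∧ val y z = 0) := by
    have hvxy := hbs.1 x hx y hy hxy
    have hvxz := hbs.1 x hx z hz hxz
    have hvyz := hbs.1 y hy z hz hyz
    have hnt : ¬ (val x y = 1 ∧ val y z = 1 ∧ val x z = 1) := fun h =>
      htf x y z ⟨hx, hy, hz, hxy, hxz, hyz, h⟩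
    omega
  · exact ⟨z, x, y, hxy, (hbs.valuationGraph_adj hx hz hxz hvxz).symm,
      (hbs.valuationGraph_adj hy hz hyz hvyz).symm, by omega, by omega, by omega⟩
  · exact ⟨y, x, z, hxz, (hbs.valuationGraph_adj hx hy hxy hvxy).symm,
      hbs.valuationGraph_adj hy hz hyz hvyz, by omega, by omega, by omega⟩
  · exact ⟨x, y, z, hyz, hbs.valuationGraph_adj hx hy hxy hvxy,
      hbs.valuationGraph_adj hx hz hxz hvxz, by omega, by omega, by omega⟩

lemma IsSaturatedPacking.isStable (h : IsSaturatedPacking (valuationGraph N val) N M)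
    (hbs : BinSym N val) (htf : TriangleFree N val) : IsStable N val M := by
  have hM := h.isMatching h.covered_subset
  have hpos : ∀ a ∈ covered M, 0 < utility val M a := fun a => h.utility_pos h.covered_subset hbs
  have hutil : ∀ a, 0 ≤ utility val M a := fun a =>
    if ha : a ∈ covered M then (hpos a ha).le else (utility_of_notMem_covered ha).ge
  intro x y z hblock
  obtain ⟨c, p, q, hpq, hcp, hcq, hc, hp, hq⟩ := hblock.exists_path hbs htf hutil
  have hfree : (freeNeighbors (valuationGraph N val) N M c).Nontrivial :=
    ⟨p, mem_freeNeighbors.2 ⟨hcp, hcp.2.1, fun h => hp.not_gt (hpos p h)⟩,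
      q, mem_freeNeighbors.2 ⟨hcq, hcq.2.1, fun h => hq.not_gt (hpos q h)⟩, hpq⟩
  obtain ⟨t, ht, hct⟩ := h.exists_isCenter_of_nontrivial c hcp.1 hfree
  exact hc.ne (hM.utility_of_isCenter ht hct)

end Preferences

/-- Every triangle-free binary symmetric instance contains a stable `P`-matching. -/
theorem triangleFree_exists_stable_pmatching [DecidableEq A]
    (N : Finset A) (val : A → A → ℤ)
    (hbs : BinSym N val) (htf : TriangleFree N val) :
    ∃ M, IsPMatching N val M ∧ IsStable N val M := by
  obtain ⟨M, hM⟩ := exists_isSaturatedPacking htf.cliqueFree_valuationGraph N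
  have hpos : ∀ a, (∃ t ∈ M, a ∈ t) → 0 < utility val M a := fun a ha =>
    hM.utility_pos hM.covered_subset hbs (mem_covered.2 ha)
  exact ⟨M, ⟨hM.isMatching hM.covered_subset, hpos⟩, hM.isStable hbs htf⟩
end

section
/- For every instance (N,V) of 3D-SR-SAS-BIN there exists a stable matching M in (N,V) such that 2·u(M) ≥ u(M') for every stable matching M' in (N,V); that is, a stable matching whose utilitarian welfare is at least half of the maximum utilitarian welfare over all stable matchings. -/
open Finset

variable {A : Type*}

/-!
A stable matching whose welfare is maximum among all stable matchings will do, so the point is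
that a stable matching exists. This is proved by induction on `N`. Agents in a matched triangle
have the largest possible utility and never block, so a triangle can be split off. In a
triangle-free instance a blocking triple is a path `x–y–z` of acceptable pairs with `x` and `z`
unmatched and the utility of `y` at most `1`. Take a stable `P`-matching of `N \ {v}`; each path
blocking it in `N` contains `v`. If `v` is the midpoint of such a path, insert that path.
Otherwise let `v–y–x` be one. If `y` is unmatched, insert it. If `y` is an endpoint of a matched
path `y–c–w` and `c` accepts an unmatched agent `u`, replace `y–c–w` by `w–c–u` and `v–y–x`. In
all these cases no utility decreases and the result is stable. In the remaining case replace
`y–c–w` by `v–y–c`. Now `w` is the exceptional agent, the other unmatched agents are the same as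
before, and `y` joins the set of agents of utility `2` accepting one of them, while no agent
leaves this set (`c` was not in it). Hence this last case cannot recur forever.
-/

/-- The acceptability graph of an instance: the edges are the pairs of distinct agents who value
each other at `1`. -/
def acceptability (val : A → A → ℤ) : SimpleGraph A where
  Adj a b := a ≠ b ∧ val a b = 1 ∧ val b a = 1
  symm := ⟨fun _ _ h => ⟨h.1.symm, h.2.2, h.2.1⟩⟩
  loopless := ⟨fun _ h => h.1 rfl⟩

section

variable [DecidableEq A] {N N' : Finset A} {val : A → A → ℤ} {M M' : Finset (Finset A)}
  {t : Finset A} {a b c u v w x y z : A}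

namespace BinSym

lemma mono (hbs : BinSym N val) (h : N' ⊆ N) : BinSym N' val :=
  ⟨fun a ha b hb => hbs.1 a (h ha) b (h hb), fun a ha b hb => hbs.2 a (h ha) b (h hb)⟩

lemma val_nonneg (hbs : BinSym N val) (ha : a ∈ N) (hb : b ∈ N) (hab : a ≠ b) :
    0 ≤ val a b := by
  rcases hbs.1 a ha b hb hab with h | h <;> simp [h]

lemma adj (hbs : BinSym N val) (ha : a ∈ N) (hb : b ∈ N) (hab : a ≠ b) (h : val a b = 1) :
    (acceptability val).Adj a b :=
  ⟨hab, h, hbs.2 a ha b hb ▸ h⟩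

end BinSym

namespace TriangleFree

lemma mono (htf : TriangleFree N val) (h : N' ⊆ N) : TriangleFree N' val :=
  fun x y z ⟨hx, hy, hz, hxyz⟩ => htf x y z ⟨h hx, h hy, h hz, hxyz⟩

lemma not_adj (htf : TriangleFree N val) (hx : x ∈ N) (hy : y ∈ N) (hz : z ∈ N)
    (hxy : (acceptability val).Adj x y) (hxz : (acceptability val).Adj x z) :
    ¬ (acceptability val).Adj y z := fun hyz =>
  htf x y z ⟨hx, hy, hz, hxy.ne, hxz.ne, hyz.ne, hxy.2.1, hyz.2.1, hxz.2.1⟩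

end TriangleFree

section Utility

lemma sum_erase_triple (hxy : x ≠ y) (hxz : x ≠ z) (hyz : y ≠ z) (f : A → ℤ) :
    ∑ b ∈ ({x, y, z} : Finset A).erase x, f b = f y + f z := by
  rw [erase_insert (by simp [hxy, hxz]), sum_pair hyz]

lemma utility_eq_zero_of_forall_notMem (h : ∀ t ∈ M, a ∉ t) : utility val M a = 0 := by
  rw [utility, filter_false_of_mem h, sum_empty]

lemma utility_insert_of_notMem (ha : a ∉ t) : utility val (insert t M) a = utility val M a := by
  rw [utility, utility, filter_insert, if_neg ha]

lemma utility_erase_of_notMem (ha : a ∉ t) : utility val (M.erase t) a = utility val M a := by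
  rw [utility, utility, filter_erase, erase_eq_of_notMem (by simp [ha])]

end Utility

namespace IsMatching

lemma mono (hM : IsMatching N M) (h : N ⊆ N') : IsMatching N' M :=
  ⟨fun t ht => ⟨(hM.1 t ht).1, (hM.1 t ht).2.trans h⟩, hM.2⟩

lemma subset (hM : IsMatching N M) (h : M' ⊆ M) : IsMatching N M' :=
  ⟨fun t ht => hM.1 t (h ht), fun t ht s hs => hM.2 t (h ht) s (h hs)⟩

lemma insert (hM : IsMatching N M) (ht : t.card = 3) (htN : t ⊆ N)
    (hdisj : ∀ s ∈ M, Disjoint t s) : IsMatching N (insert t M) := by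
  refine ⟨(forall_mem_insert _ _ _).2 ⟨⟨ht, htN⟩, hM.1⟩, fun s hs r hr hsr => ?_⟩
  obtain rfl | hs' := mem_insert.1 hs <;> obtain rfl | hr' := mem_insert.1 hr
  · exact (hsr rfl).elim
  · exact hdisj r hr'
  · exact (hdisj s hs').symm
  · exact hM.2 s hs' r hr' hsr

lemma eq_of_mem (hM : IsMatching N M) {s : Finset A} (ht : t ∈ M) (hs : s ∈ M) (hat : a ∈ t)
    (has : a ∈ s) : t = s := by
  by_contra h
  exact disjoint_left.1 (hM.2 t ht s hs h) hat has

lemma utility_eq_sum (hM : IsMatching N M) (ht : t ∈ M) (ha : a ∈ t) :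
    utility val M a = ∑ b ∈ t.erase a, val a b := by
  have hfilter : M.filter (a ∈ ·) = {t} := by
    ext s
    rw [mem_filter, mem_singleton]
    exact ⟨fun hs => hM.eq_of_mem hs.1 ht hs.2 ha, by rintro rfl; exact ⟨ht, ha⟩⟩
  rw [utility, hfilter, sum_singleton]

lemma utility_triple (hM : IsMatching N M) (ht : {x, y, z} ∈ M) (hxy : x ≠ y) (hxz : x ≠ z)
    (hyz : y ≠ z) :
    utility val M x = val x y + val x z ∧ utility val M y = val y x + val y z ∧
      utility val M z = val z x + val z y := by
  refine ⟨?_, ?_, ?_⟩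
  · rw [hM.utility_eq_sum ht (by simp), sum_erase_triple hxy hxz hyz]
  · rw [hM.utility_eq_sum ht (by simp), insert_comm, sum_erase_triple hxy.symm hyz hxz]
  · rw [hM.utility_eq_sum ht (by simp), pair_comm y z, insert_comm,
      sum_erase_triple hxz.symm hyz.symm hxy]

lemma utility_nonneg (hM : IsMatching N M) (hbs : BinSym N val) (a : A) :
    0 ≤ utility val M a := by
  refine sum_nonneg fun t ht => sum_nonneg fun b hb => ?_
  rw [mem_filter] at ht
  rw [mem_erase] at hb
  have htN := (hM.1 t ht.1).2
  exact hbs.val_nonneg (htN ht.2) (htN hb.2) hb.1.symm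

lemma utility_erase_of_mem (hM : IsMatching N M) (ht : t ∈ M) (ha : a ∈ t) :
    utility val (M.erase t) a = 0 :=
  utility_eq_zero_of_forall_notMem fun _ hs has =>
    (mem_erase.1 hs).1 (hM.eq_of_mem (mem_erase.1 hs).2 ht has ha)

lemma utility_erase_eq_zero (hM : IsMatching N M) (ht : t ∈ M) (ha : utility val M a = 0) :
    utility val (M.erase t) a = 0 := by
  by_cases hat : a ∈ t
  · exact hM.utility_erase_of_mem ht hat
  · rw [utility_erase_of_notMem hat, ha]

end IsMatching

namespace IsPMatching

lemma mono (hM : IsPMatching N val M) (h : N ⊆ N') : IsPMatching N' val M :=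
  ⟨hM.1.mono h, hM.2⟩

lemma notMem_of_utility_eq_zero (hM : IsPMatching N val M) (ha : utility val M a = 0)
    (ht : t ∈ M) : a ∉ t :=
  fun hat => (hM.2 a ⟨t, ht, hat⟩).ne' ha

lemma utility_eq_zero_of_notMem (hM : IsPMatching N val M) (ha : a ∉ N) :
    utility val M a = 0 :=
  utility_eq_zero_of_forall_notMem fun _ ht hat => ha ((hM.1.1 _ ht).2 hat)

lemma erase (hM : IsPMatching N val M) (t : Finset A) : IsPMatching N val (M.erase t) := by
  refine ⟨hM.1.subset (erase_subset t M), fun a ⟨s, hs, has⟩ => ?_⟩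
  obtain ⟨hst, hs⟩ := mem_erase.1 hs
  by_cases hat : a ∈ t
  · by_cases ht : t ∈ M
    · exact (hst (hM.1.eq_of_mem hs ht has hat)).elim
    · rw [erase_eq_of_notMem ht]
      exact hM.2 a ⟨s, hs, has⟩
  · rw [utility_erase_of_notMem hat]
    exact hM.2 a ⟨s, hs, has⟩

lemma exists_insert_triple (hM : IsPMatching N val M) (hx : x ∈ N) (hy : y ∈ N) (hz : z ∈ N)
    (hxy : x ≠ y) (hxz : x ≠ z) (hyz : y ≠ z) (hx₀ : utility val M x = 0)
    (hy₀ : utility val M y = 0) (hz₀ : utility val M z = 0) (hx₁ : 0 < val x y + val x z)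
    (hy₁ : 0 < val y x + val y z) (hz₁ : 0 < val z x + val z y) :
    ∃ M', IsPMatching N val M' ∧ utility val M' x = val x y + val x z ∧
      utility val M' y = val y x + val y z ∧ utility val M' z = val z x + val z y ∧
      ∀ a, a ≠ x → a ≠ y → a ≠ z → utility val M' a = utility val M a := by
  have hM' : IsMatching N (insert {x, y, z} M) := by
    refine hM.1.insert (card_eq_three.2 ⟨x, y, z, hxy, hxz, hyz, rfl⟩)
      (by simp [insert_subset_iff, hx, hy, hz]) fun s hs => ?_
    simp only [disjoint_insert_left, disjoint_singleton_left]
    exact ⟨hM.notMem_of_utility_eq_zero hx₀ hs, hM.notMem_of_utility_eq_zero hy₀ hs,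
      hM.notMem_of_utility_eq_zero hz₀ hs⟩
  obtain ⟨ux, uy, uz⟩ := hM'.utility_triple (val := val) (mem_insert_self _ _) hxy hxz hyz
  have hrest (a : A) (hax : a ≠ x) (hay : a ≠ y) (haz : a ≠ z) :
      utility val (insert {x, y, z} M) a = utility val M a :=
    utility_insert_of_notMem (by simp [hax, hay, haz])
  refine ⟨_, ⟨hM', fun a ⟨s, hs, has⟩ => ?_⟩, ux, uy, uz, hrest⟩
  by_cases ha : a = x ∨ a = y ∨ a = z
  · rcases ha with rfl | rfl | rfl <;> omega
  · push Not at ha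
    obtain rfl | hs := mem_insert.1 hs
    · simp [ha] at has
    · rw [hrest a ha.1 ha.2.1 ha.2.2]
      exact hM.2 a ⟨s, hs, has⟩

lemma exists_insert_path (hM : IsPMatching N val M) (hbs : BinSym N val) (hx : x ∈ N)
    (hy : y ∈ N) (hz : z ∈ N) (hyx : (acceptability val).Adj y x)
    (hyz : (acceptability val).Adj y z) (hxz : x ≠ z) (hx₀ : utility val M x = 0)
    (hy₀ : utility val M y = 0) (hz₀ : utility val M z = 0) :
    ∃ M', IsPMatching N val M' ∧ 1 ≤ utility val M' x ∧ utility val M' y = 2 ∧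
      1 ≤ utility val M' z ∧ (∀ a, utility val M a ≤ utility val M' a) ∧
      ∀ a, a ≠ x → a ≠ y → a ≠ z → utility val M' a = utility val M a := by
  have vxz := hbs.val_nonneg hx hz hxz
  have vzx := hbs.val_nonneg hz hx hxz.symm
  obtain ⟨M', hM', ux, uy, uz, hrest⟩ := hM.exists_insert_triple hx hy hz hyx.ne' hxz hyz.ne
    hx₀ hy₀ hz₀ (by linarith [hyx.2.2]) (by linarith [hyx.2.1, hyz.2.1]) (by linarith [hyz.2.2])
  rw [hyx.2.2] at ux
  rw [hyx.2.1, hyz.2.1] at uy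
  rw [hyz.2.2] at uz
  refine ⟨M', hM', by omega, by omega, by omega, fun a => ?_, hrest⟩
  by_cases ha : a = x ∨ a = y ∨ a = z
  · rcases ha with rfl | rfl | rfl <;> omega
  · push Not at ha
    exact (hrest a ha.1 ha.2.1 ha.2.2).ge

end IsPMatching

/-- `M` contains the triple `{y, c, w}`, whose acceptable pairs are exactly `{c, y}` and `{c, w}`:
it is a path with midpoint `c` and endpoints `y` and `w`. -/
structure IsMatchedPath (val : A → A → ℤ) (M : Finset (Finset A)) (y c w : A) : Prop where
  mem : {y, c, w} ∈ M
  ne : y ≠ w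
  adj_left : (acceptability val).Adj c y
  adj_right : (acceptability val).Adj c w
  utility_left : utility val M y = 1
  utility_mid : utility val M c = 2
  utility_right : utility val M w = 1

namespace IsMatchedPath

lemma mid_mem (h : IsMatchedPath val M y c w) (hM : IsMatching N M) : c ∈ N :=
  (hM.1 _ h.mem).2 (by simp)

lemma right_mem (h : IsMatchedPath val M y c w) (hM : IsMatching N M) : w ∈ N :=
  (hM.1 _ h.mem).2 (by simp)

end IsMatchedPath

lemma IsPMatching.exists_isMatchedPath (hM : IsPMatching N val M) (hbs : BinSym N val)
    (hy : utility val M y = 1) : ∃ c w, IsMatchedPath val M y c w := by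
  obtain ⟨t, ht, hyt⟩ : ∃ t ∈ M, y ∈ t := by
    by_contra! h
    simp [utility_eq_zero_of_forall_notMem h] at hy
  obtain ⟨c, w, hyc, hyw, hcw, rfl⟩ : ∃ c w, y ≠ c ∧ y ≠ w ∧ c ≠ w ∧ t = {y, c, w} := by
    obtain ⟨c, w, hcw, herase⟩ := card_eq_two.1
      ((card_erase_of_mem hyt).trans (by rw [(hM.1.1 t ht).1]))
    have hy_notMem : y ∉ ({c, w} : Finset A) := herase ▸ notMem_erase y t
    simp only [mem_insert, mem_singleton, not_or] at hy_notMem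
    exact ⟨c, w, hy_notMem.1, hy_notMem.2, hcw, by rw [← herase, insert_erase hyt]⟩
  wlog hval : val y c = 1 generalizing c w
  · refine this w c hyw hyc hcw.symm (pair_comm c w ▸ ht) (by simp) ?_
    have := hM.1.utility_triple (val := val) ht hyc hyw hcw
    have := hbs.1 y ((hM.1.1 _ ht).2 (by simp)) c ((hM.1.1 _ ht).2 (by simp)) hyc
    omega
  have htN := (hM.1.1 _ ht).2
  have hyN : y ∈ N := htN (by simp)
  have hcN : c ∈ N := htN (by simp)
  have hwN : w ∈ N := htN (by simp)
  obtain ⟨uy, uc, uw⟩ := hM.1.utility_triple (val := val) ht hyc hyw hcw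
  have hwpos := hM.2 w ⟨_, ht, by simp⟩
  have vyw := hbs.2 y hyN w hwN
  have vyc := hbs.2 y hyN c hcN
  have vcw := hbs.2 c hcN w hwN
  have vwc := hbs.1 w hwN c hcN hcw.symm
  exact ⟨c, w, ht, hyw, hbs.adj hcN hyN hyc.symm (by omega), hbs.adj hcN hwN hcw (by omega),
    hy, by omega, by omega⟩

/-- Agents `x`, `y`, `z` of `N` that block `M` as a path with midpoint `y`: in a triangle-free
instance all blocking triples arise in this way. -/
structure IsBlockingPath (N : Finset A) (val : A → A → ℤ) (M : Finset (Finset A))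
    (x y z : A) : Prop where
  left_mem : x ∈ N
  mid_mem : y ∈ N
  right_mem : z ∈ N
  ne : x ≠ z
  adj_left : (acceptability val).Adj y x
  adj_right : (acceptability val).Adj y z
  utility_left : utility val M x = 0
  utility_mid : utility val M y ≤ 1
  utility_right : utility val M z = 0

namespace IsBlockingPath

lemma symm (h : IsBlockingPath N val M x y z) : IsBlockingPath N val M z y x :=
  ⟨h.right_mem, h.mid_mem, h.left_mem, h.ne.symm, h.adj_right, h.adj_left, h.utility_right,
    h.utility_mid, h.utility_left⟩

lemma of_utility_le (h : IsBlockingPath N val M' x y z)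
    (hle : ∀ a, utility val M a ≤ utility val M' a) (hnonneg : ∀ a, 0 ≤ utility val M a) :
    IsBlockingPath N val M x y z where
  __ := h
  utility_left := ((hle x).trans h.utility_left.le).antisymm (hnonneg x)
  utility_mid := (hle y).trans h.utility_mid
  utility_right := ((hle z).trans h.utility_right.le).antisymm (hnonneg z)

lemma blocks (h : IsBlockingPath N val M x y z) (hbs : BinSym N val) :
    Blocks N val M x y z := by
  obtain ⟨hx, hy, hz, hxz, ⟨hyx, vyx, vxy⟩, ⟨hyz, vyz, vzy⟩, ux, uy, uz⟩ := h
  have vxz := hbs.val_nonneg hx hz hxz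
  have vzx := hbs.val_nonneg hz hx hxz.symm
  exact ⟨hx, hy, hz, hyx.symm, hxz, hyz, by omega, by omega, by omega⟩

end IsBlockingPath

lemma Blocks.exists_isBlockingPath (h : Blocks N val M x y z) (hbs : BinSym N val)
    (htf : TriangleFree N val) (hnonneg : ∀ a, 0 ≤ utility val M a) :
    ∃ x y z, IsBlockingPath N val M x y z := by
  obtain ⟨hx, hy, hz, hxy, hxz, hyz, bx, bY, bz⟩ := h
  have ux := hnonneg x
  have uy := hnonneg y
  have uz := hnonneg z
  have vxy := hbs.1 x hx y hy hxy
  have vxz := hbs.1 x hx z hz hxz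
  have vyz := hbs.1 y hy z hz hyz
  rw [hbs.2 y hy x hx] at bY
  rw [hbs.2 z hz x hx, hbs.2 z hz y hy] at bz
  obtain hxy₀ | hxz₀ | hyz₀ : val x y = 0 ∨ val x z = 0 ∨ val y z = 0 := by
    by_contra! hne
    exact htf x y z ⟨hx, hy, hz, hxy, hxz, hyz, by tauto, by tauto, by tauto⟩
  · exact ⟨x, z, y, hx, hz, hy, hxy, (hbs.adj hx hz hxz (by omega)).symm,
      (hbs.adj hy hz hyz (by omega)).symm, by omega, by omega, by omega⟩
  · exact ⟨x, y, z, hx, hy, hz, hxz, (hbs.adj hx hy hxy (by omega)).symm,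
      hbs.adj hy hz hyz (by omega), by omega, by omega, by omega⟩
  · exact ⟨y, x, z, hy, hx, hz, hyz, hbs.adj hx hy hxy (by omega),
      hbs.adj hx hz hxz (by omega), by omega, by omega, by omega⟩

namespace IsPMatching

/-- The matched path `y–c–w` gives way to the two paths `w–c–u` and `v–y–x`. -/
lemma exists_augment (hM : IsPMatching N val M) (hbs : BinSym N val)
    (hpath : IsBlockingPath N val M v y x) (hycw : IsMatchedPath val M y c w) (hu : u ∈ N)
    (hu₀ : utility val M u = 0) (hcu : (acceptability val).Adj c u) (huv : u ≠ v) (hux : u ≠ x) :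
    ∃ M', IsPMatching N val M' ∧ 1 ≤ utility val M' v ∧
      ∀ a, utility val M a ≤ utility val M' a := by
  have uv := hpath.utility_left
  have ux := hpath.utility_right
  have uy := hycw.utility_left
  have uc := hycw.utility_mid
  have uw := hycw.utility_right
  have hremoved : ∀ a ∈ ({y, c, w} : Finset A), utility val (M.erase {y, c, w}) a = 0 :=
    fun a => hM.1.utility_erase_of_mem hycw.mem
  have hunmatched (a : A) (ha : utility val M a = 0) : utility val (M.erase {y, c, w}) a = 0 :=
    hM.1.utility_erase_eq_zero hycw.mem ha
  have hne {a b : A} (hab : utility val M a ≠ utility val M b) : a ≠ b := ne_of_apply_ne _ hab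
  obtain ⟨M₁, hM₁, uw₁, uc₁, -, hle₁, hrest₁⟩ :=
    (hM.erase {y, c, w}).exists_insert_path hbs (hycw.right_mem hM.1) (hycw.mid_mem hM.1) hu
      hycw.adj_right hcu (hne (by omega)) (hremoved w (by simp)) (hremoved c (by simp))
      (hunmatched u hu₀)
  have uv₁ : utility val M₁ v = 0 :=
    (hrest₁ v (hne (by omega)) (hne (by omega)) huv.symm).trans (hunmatched v uv)
  have uy₁ : utility val M₁ y = 0 :=
    (hrest₁ y hycw.ne (hne (by omega)) (hne (by omega))).trans (hremoved y (by simp))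
  have ux₁ : utility val M₁ x = 0 :=
    (hrest₁ x (hne (by omega)) (hne (by omega)) hux.symm).trans (hunmatched x ux)
  obtain ⟨M₂, hM₂, uv₂, uy₂, -, hle₂, -⟩ := hM₁.exists_insert_path hbs hpath.left_mem
    hpath.mid_mem hpath.right_mem hpath.adj_left hpath.adj_right hpath.ne uv₁ uy₁ ux₁
  refine ⟨M₂, hM₂, uv₂, fun a => ?_⟩
  by_cases ha : a ∈ ({y, c, w} : Finset A)
  · simp only [mem_insert, mem_singleton] at ha
    obtain rfl | rfl | rfl := ha
    · omega
    · exact uc.trans_le (uc₁.ge.trans (hle₂ _))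
    · exact uw.trans_le (uw₁.trans (hle₂ _))
  · exact (utility_erase_of_notMem ha).ge.trans ((hle₁ a).trans (hle₂ a))

/-- The matched path `y–c–w` gives way to the path `v–y–c`, so that `w` becomes unmatched in
place of `v`. -/
lemma exists_rotate (hM : IsPMatching N val M) (hbs : BinSym N val)
    (hpath : IsBlockingPath N val M v y x) (hycw : IsMatchedPath val M y c w) :
    ∃ M', IsPMatching N val M' ∧ utility val M' y = 2 ∧ utility val M' w = 0 ∧
      (∀ a, (a ≠ w ∧ utility val M' a = 0) ↔ (a ≠ v ∧ utility val M a = 0)) ∧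
      ∀ a, a ≠ v → a ≠ y → a ≠ c → a ≠ w → utility val M' a = utility val M a := by
  have uv := hpath.utility_left
  have uy := hycw.utility_left
  have uc := hycw.utility_mid
  have uw := hycw.utility_right
  have hremoved : ∀ a ∈ ({y, c, w} : Finset A), utility val (M.erase {y, c, w}) a = 0 :=
    fun a => hM.1.utility_erase_of_mem hycw.mem
  have hne {a b : A} (hab : utility val M a ≠ utility val M b) : a ≠ b := ne_of_apply_ne _ hab
  obtain ⟨M', hM', uv', uy', uc', -, hrest⟩ :=
    (hM.erase {y, c, w}).exists_insert_path hbs hpath.left_mem hpath.mid_mem (hycw.mid_mem hM.1)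
      hpath.adj_left hycw.adj_left.symm (hne (by omega)) (hM.1.utility_erase_eq_zero hycw.mem uv)
      (hremoved y (by simp)) (hremoved c (by simp))
  have uw' : utility val M' w = 0 :=
    (hrest w (hne (by omega)) hycw.ne.symm (hne (by omega))).trans (hremoved w (by simp))
  have hothers (a : A) (hav : a ≠ v) (hay : a ≠ y) (hac : a ≠ c) (haw : a ≠ w) :
      utility val M' a = utility val M a := by
    rw [hrest a hav hay hac, utility_erase_of_notMem (by simp [hay, hac, haw])]
  refine ⟨M', hM', uy', uw', fun a => ?_, hothers⟩
  by_cases ha : a = v ∨ a = y ∨ a = c ∨ a = w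
  · obtain rfl | rfl | rfl | rfl := ha <;> grind
  · push Not at ha
    simp only [hothers a ha.1 ha.2.1 ha.2.2.1 ha.2.2.2, ne_eq, ha, not_false_eq_true, true_and]

end IsPMatching

/-- A `P`-matching of `N` leaving the agent `v` unmatched, all of whose blocking triples
contain `v`. -/
structure IsStableExcept (N : Finset A) (val : A → A → ℤ) (v : A) (M : Finset (Finset A)) :
    Prop where
  mem : v ∈ N
  isPMatching : IsPMatching N val M
  utility_eq_zero : utility val M v = 0
  isStable_erase : IsStable (N.erase v) val M

/-- The agents of maximum utility who accept an unmatched agent other than `v`. Their number is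
the potential that increases when the exceptional agent `v` is exchanged for another one. -/
def anchors (N : Finset A) (val : A → A → ℤ) (v : A) (M : Finset (Finset A)) : Set A :=
  {c | c ∈ N ∧ utility val M c = 2 ∧
    ∃ x ∈ N, x ≠ v ∧ utility val M x = 0 ∧ (acceptability val).Adj c x}

namespace IsStableExcept

lemma eq_or_eq_or_eq_of_isBlockingPath (h : IsStableExcept N val v M) (hbs : BinSym N val)
    (hpath : IsBlockingPath N val M x y z) : x = v ∨ y = v ∨ z = v := by
  by_contra! hne
  refine h.isStable_erase x y z (IsBlockingPath.blocks { hpath with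
    left_mem := mem_erase.2 ⟨hne.1, hpath.left_mem⟩
    mid_mem := mem_erase.2 ⟨hne.2.1, hpath.mid_mem⟩
    right_mem := mem_erase.2 ⟨hne.2.2, hpath.right_mem⟩ } (hbs.mono (erase_subset v N)))

lemma isStable_of_utility_le (h : IsStableExcept N val v M) (hbs : BinSym N val)
    (htf : TriangleFree N val) (hM' : IsMatching N M')
    (hle : ∀ a, utility val M a ≤ utility val M' a) (hv : 1 ≤ utility val M' v)
    (hmid : ∀ x z, ¬ IsBlockingPath N val M' x v z) : IsStable N val M' := by
  intro x y z hblocks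
  obtain ⟨x, y, z, hpath⟩ := hblocks.exists_isBlockingPath hbs htf (hM'.utility_nonneg hbs)
  have hpathM := hpath.of_utility_le hle (h.isPMatching.1.utility_nonneg hbs)
  obtain rfl | rfl | rfl := h.eq_or_eq_or_eq_of_isBlockingPath hbs hpathM
  · exact absurd hpath.utility_left (by omega)
  · exact hmid x z hpath
  · exact absurd hpath.utility_right (by omega)

lemma exists_isStable_of_midpoint (h : IsStableExcept N val v M) (hbs : BinSym N val)
    (htf : TriangleFree N val) (hpath : IsBlockingPath N val M x v z) :
    ∃ M', IsPMatching N val M' ∧ IsStable N val M' := by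
  obtain ⟨M', hM', -, uv, -, hle, -⟩ := h.isPMatching.exists_insert_path hbs hpath.left_mem
    h.mem hpath.right_mem hpath.adj_left hpath.adj_right hpath.ne hpath.utility_left
    h.utility_eq_zero hpath.utility_right
  exact ⟨M', hM', h.isStable_of_utility_le hbs htf hM'.1 hle (by omega)
    fun _ _ hpath' => absurd hpath'.utility_mid (by omega)⟩

lemma exists_isStable_of_unmatched_midpoint (h : IsStableExcept N val v M)
    (hbs : BinSym N val) (htf : TriangleFree N val)
    (hmid : ∀ x z, ¬ IsBlockingPath N val M x v z) (hpath : IsBlockingPath N val M v y x)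
    (hy : utility val M y = 0) : ∃ M', IsPMatching N val M' ∧ IsStable N val M' := by
  obtain ⟨M', hM', uv, -, -, hle, -⟩ := h.isPMatching.exists_insert_path hbs h.mem
    hpath.mid_mem hpath.right_mem hpath.adj_left hpath.adj_right hpath.ne h.utility_eq_zero hy
    hpath.utility_right
  exact ⟨M', hM', h.isStable_of_utility_le hbs htf hM'.1 hle uv fun p q hpq =>
    hmid p q (hpq.of_utility_le hle (h.isPMatching.1.utility_nonneg hbs))⟩

lemma exists_isStable_of_adj_unmatched (h : IsStableExcept N val v M) (hbs : BinSym N val)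
    (htf : TriangleFree N val) (hmid : ∀ x z, ¬ IsBlockingPath N val M x v z)
    (hpath : IsBlockingPath N val M v y x) (hycw : IsMatchedPath val M y c w) (hu : u ∈ N)
    (hu₀ : utility val M u = 0) (hcu : (acceptability val).Adj c u) :
    ∃ M', IsPMatching N val M' ∧ IsStable N val M' := by
  have hcN := hycw.mid_mem h.isPMatching.1
  have hyc := hycw.adj_left.symm
  have huv : u ≠ v := by
    rintro rfl
    exact htf.not_adj hpath.mid_mem hcN hu hyc hpath.adj_left hcu
  have hux : u ≠ x := by
    rintro rfl
    exact htf.not_adj hpath.mid_mem hcN hu hyc hpath.adj_right hcu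
  obtain ⟨M', hM', uv, hle⟩ :=
    h.isPMatching.exists_augment hbs hpath hycw hu hu₀ hcu huv hux
  exact ⟨M', hM', h.isStable_of_utility_le hbs htf hM'.1 hle uv fun p q hpq =>
    hmid p q (hpq.of_utility_le hle (h.isPMatching.1.utility_nonneg hbs))⟩

lemma exists_anchors_ssubset (h : IsStableExcept N val v M) (hbs : BinSym N val)
    (htf : TriangleFree N val) (hmid : ∀ x z, ¬ IsBlockingPath N val M x v z)
    (hpath : IsBlockingPath N val M v y x) (hycw : IsMatchedPath val M y c w)
    (hc : ∀ u ∈ N, utility val M u = 0 → ¬ (acceptability val).Adj c u) :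
    ∃ M', IsStableExcept N val w M' ∧ anchors N val v M ⊂ anchors N val w M' := by
  have uv := h.utility_eq_zero
  have uy := hycw.utility_left
  have uw := hycw.utility_right
  obtain ⟨M', hM', uy', uw', hunmatched, hothers⟩ :=
    h.isPMatching.exists_rotate hbs hpath hycw
  refine ⟨M', ⟨hycw.right_mem h.isPMatching.1, hM', uw', fun p q r hblocks => ?_⟩,
    fun d hd => ?_, fun hsubset => ?_⟩
  · obtain ⟨p, q, r, hpqr⟩ := hblocks.exists_isBlockingPath (hbs.mono (erase_subset w N))
      (htf.mono (erase_subset w N)) (hM'.1.utility_nonneg hbs)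
    obtain ⟨hpw, hpN⟩ := mem_erase.1 hpqr.left_mem
    obtain ⟨hqw, hqN⟩ := mem_erase.1 hpqr.mid_mem
    obtain ⟨hrw, hrN⟩ := mem_erase.1 hpqr.right_mem
    obtain ⟨hpv, up⟩ := (hunmatched p).1 ⟨hpw, hpqr.utility_left⟩
    obtain ⟨hrv, ur⟩ := (hunmatched r).1 ⟨hrw, hpqr.utility_right⟩
    have hqc : q ≠ c := fun hq => hc p hpN up (hq ▸ hpqr.adj_left)
    have uq : utility val M q ≤ 1 := by
      by_cases hq : q = v ∨ q = y
      · obtain rfl | rfl := hq <;> omega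
      · push Not at hq
        exact (hothers q hq.1 hq.2 hqc hqw).ge.trans hpqr.utility_mid
    have hpqrM : IsBlockingPath N val M p q r :=
      ⟨hpN, hqN, hrN, hpqr.ne, hpqr.adj_left, hpqr.adj_right, up, uq, ur⟩
    obtain hp | rfl | hr := h.eq_or_eq_or_eq_of_isBlockingPath hbs hpqrM
    exacts [hpv hp, hmid p r hpqrM, hrv hr]
  · obtain ⟨hdN, ud, a, haN, hav, ua, hda⟩ := hd
    obtain ⟨haw, ua'⟩ := (hunmatched a).2 ⟨hav, ua⟩
    have hdc : d ≠ c := fun hd => hc a haN ua (hd ▸ hda)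
    have hne {b : A} (hb : utility val M b < 2) : d ≠ b :=
      ne_of_apply_ne (utility val M) (by omega)
    exact ⟨hdN, (hothers d (hne (by omega)) (hne (by omega)) hdc (hne (by omega))).trans ud,
      a, haN, haw, ua', hda⟩
  · obtain ⟨hxw, ux'⟩ := (hunmatched x).2 ⟨hpath.ne.symm, hpath.utility_right⟩
    have hyM := hsubset ⟨hpath.mid_mem, uy', x, hpath.right_mem, hxw, ux', hpath.adj_right⟩
    exact absurd hyM.2.1 (by omega)

lemma exists_isStable_or_anchors_ssubset (h : IsStableExcept N val v M) (hbs : BinSym N val)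
    (htf : TriangleFree N val) :
    (∃ M', IsPMatching N val M' ∧ IsStable N val M') ∨
      ∃ w M', IsStableExcept N val w M' ∧ anchors N val v M ⊂ anchors N val w M' := by
  by_cases hmid : ∃ x z, IsBlockingPath N val M x v z
  · obtain ⟨x, z, hpath⟩ := hmid
    exact .inl (h.exists_isStable_of_midpoint hbs htf hpath)
  push Not at hmid
  by_cases hend : ∃ y x, IsBlockingPath N val M v y x
  · obtain ⟨y, x, hpath⟩ := hend
    obtain hy | hy : utility val M y = 0 ∨ utility val M y = 1 := by
      have := h.isPMatching.1.utility_nonneg hbs y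
      have := hpath.utility_mid
      omega
    · exact .inl (h.exists_isStable_of_unmatched_midpoint hbs htf hmid hpath hy)
    obtain ⟨c, w, hycw⟩ := h.isPMatching.exists_isMatchedPath hbs hy
    by_cases hc : ∃ u ∈ N, utility val M u = 0 ∧ (acceptability val).Adj c u
    · obtain ⟨u, hu, hu₀, hcu⟩ := hc
      exact .inl (h.exists_isStable_of_adj_unmatched hbs htf hmid hpath hycw hu hu₀ hcu)
    · push Not at hc
      exact .inr ⟨w, h.exists_anchors_ssubset hbs htf hmid hpath hycw hc⟩
  · refine .inl ⟨M, h.isPMatching, fun x y z hblocks => ?_⟩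
    obtain ⟨x, y, z, hpath⟩ :=
      hblocks.exists_isBlockingPath hbs htf (h.isPMatching.1.utility_nonneg hbs)
    obtain rfl | rfl | rfl := h.eq_or_eq_or_eq_of_isBlockingPath hbs hpath
    · exact hend ⟨y, z, hpath⟩
    · exact hmid x z hpath
    · exact hend ⟨y, x, hpath.symm⟩

lemma exists_isStable (h : IsStableExcept N val v M) (hbs : BinSym N val)
    (htf : TriangleFree N val) : ∃ M', IsPMatching N val M' ∧ IsStable N val M' := by
  let potentials : Set (Set A) := {s | ∃ v M, IsStableExcept N val v M ∧ anchors N val v M = s}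
  have hfinite : potentials.Finite := by
    refine N.finite_toSet.finite_subsets.subset ?_
    rintro _ ⟨v, M, -, rfl⟩ c hc
    exact hc.1
  obtain ⟨_, ⟨v, M, h, rfl⟩, hmax⟩ := hfinite.exists_maximal ⟨_, v, M, h, rfl⟩
  obtain hM' | ⟨w, M', h', hlt⟩ := h.exists_isStable_or_anchors_ssubset hbs htf
  · exact hM'
  · exact absurd (hmax ⟨w, M', h', rfl⟩ hlt.le) hlt.not_ge

end IsStableExcept

lemma IsTriangle.subset (h : IsTriangle N val x y z) : {x, y, z} ⊆ N := by
  simp [insert_subset_iff, h.1, h.2.1, h.2.2.1]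

lemma IsTriangle.exists_isStable_of_sdiff (h : IsTriangle N val x y z) (hbs : BinSym N val)
    (hM : IsPMatching (N \ {x, y, z}) val M) (hS : IsStable (N \ {x, y, z}) val M) :
    ∃ M', IsPMatching N val M' ∧ IsStable N val M' := by
  obtain ⟨hx, hy, hz, hxy, hxz, hyz, vxy, vyz, vxz⟩ := h
  have vyx := hbs.2 y hy x hx ▸ vxy
  have vzx := hbs.2 z hz x hx ▸ vxz
  have vzy := hbs.2 z hz y hy ▸ vyz
  obtain ⟨M', hM', ux, uy, uz, hrest⟩ := (hM.mono sdiff_subset).exists_insert_triple hx hy hz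
    hxy hxz hyz (hM.utility_eq_zero_of_notMem (by simp)) (hM.utility_eq_zero_of_notMem (by simp))
    (hM.utility_eq_zero_of_notMem (by simp)) (by omega) (by omega) (by omega)
  have hoff {a b c : A} (ha : a ∈ N) (hb : b ∈ N) (hc : c ∈ N) (hab : a ≠ b) (hac : a ≠ c)
      (hlt : utility val M' a < val a b + val a c) : a ≠ x ∧ a ≠ y ∧ a ≠ z := by
    have vab := hbs.1 a ha b hb hab
    have vac := hbs.1 a ha c hc hac
    refine ⟨?_, ?_, ?_⟩ <;> rintro rfl <;> omega
  refine ⟨M', hM', ?_⟩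
  rintro a b c ⟨ha, hb, hc, hab, hac, hbc, ba, bb, bc⟩
  obtain ⟨hax, hay, haz⟩ := hoff ha hb hc hab hac ba
  obtain ⟨hbx, hby, hbz⟩ := hoff hb ha hc hab.symm hbc bb
  obtain ⟨hcx, hcy, hcz⟩ := hoff hc ha hb hac.symm hbc.symm bc
  rw [hrest a hax hay haz] at ba
  rw [hrest b hbx hby hbz] at bb
  rw [hrest c hcx hcy hcz] at bc
  exact hS a b c ⟨by simp [*], by simp [*], by simp [*], hab, hac, hbc, ba, bb, bc⟩

lemma BinSym.exists_isPMatching_isStable (hbs : BinSym N val) :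
    ∃ M, IsPMatching N val M ∧ IsStable N val M := by
  induction N using Finset.strongInduction with
  | H N ih =>
    by_cases htf : TriangleFree N val
    · obtain rfl | ⟨v, hv⟩ := N.eq_empty_or_nonempty
      · exact ⟨∅, ⟨⟨by simp, by simp⟩, by simp⟩, fun x y z h => notMem_empty x h.1⟩
      obtain ⟨M, hM, hS⟩ := ih _ (erase_ssubset hv) (hbs.mono (erase_subset v N))
      have h : IsStableExcept N val v M :=
        ⟨hv, hM.mono (erase_subset v N), hM.utility_eq_zero_of_notMem (notMem_erase v N), hS⟩
      exact h.exists_isStable hbs htf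
    · simp only [TriangleFree, not_forall, not_not] at htf
      obtain ⟨x, y, z, hxyz⟩ := htf
      obtain ⟨M, hM, hS⟩ := ih (N \ {x, y, z})
        (sdiff_ssubset hxyz.subset ⟨x, by simp⟩) (hbs.mono sdiff_subset)
      exact hxyz.exists_isStable_of_sdiff hbs hM hS

lemma exists_isStable_max_welfare (h : ∃ M, IsMatching N M ∧ IsStable N val M) :
    ∃ M, IsMatching N M ∧ IsStable N val M ∧
      ∀ M', IsMatching N M' → IsStable N val M' →
        ∑ a ∈ N, utility val M' a ≤ ∑ a ∈ N, utility val M a := by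
  have hfinite : {M | IsMatching N M ∧ IsStable N val M}.Finite :=
    N.powerset.powerset.finite_toSet.subset fun M hM =>
      mem_powerset.2 fun t ht => mem_powerset.2 (hM.1.1 t ht).2
  obtain ⟨M, ⟨hM, hS⟩, hmax⟩ :=
    Set.exists_max_image _ (fun M => ∑ a ∈ N, utility val M a) hfinite h
  exact ⟨M, hM, hS, fun M' hM' hS' => hmax M' ⟨hM', hS'⟩⟩

end

theorem exists_stable_matching_half_max_welfare_general [DecidableEq A]
    (N : Finset A) (val : A → A → ℤ) (hbs : BinSym N val) :
    ∃ M, IsMatching N M ∧ IsStable N val M ∧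
      ∀ M', IsMatching N M' → IsStable N val M' →
        ∑ a ∈ N, utility val M' a ≤ ∑ a ∈ N, utility val M a := by
  obtain ⟨M, hM, hS⟩ := hbs.exists_isPMatching_isStable
  exact exists_isStable_max_welfare ⟨M, hM.1, hS⟩

/-- Every binary symmetric instance contains a stable matching whose utilitarian welfare
is at least half of the maximum utilitarian welfare taken over all stable matchings. -/
theorem exists_stable_matching_half_max_welfare [DecidableEq A]
    (N : Finset A) (val : A → A → ℤ) (hbs : BinSym N val) :
    ∃ M, IsMatching N M ∧ IsStable N val M ∧
      ∀ M', IsMatching N M' → IsStable N val M' →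
        ∑ a ∈ N, utility val M' a ≤ 2 * ∑ a ∈ N, utility val M a := by
  obtain ⟨M, hM, hS, hmax⟩ := exists_stable_matching_half_max_welfare_general N val hbs
  have hnonneg : 0 ≤ ∑ a ∈ N, utility val M a := sum_nonneg fun a _ => hM.utility_nonneg hbs a
  exact ⟨M, hM, hS, fun M' hM' hS' => by linarith [hmax M' hM' hS']⟩
end
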